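/- Let F, G ⊂ ℝ^k be symmetric convex sets with compact closure and nonempty interior. Let μ_B denote the centered Gaussian measure on ℝ^{2k} with nonsingular covariance matrix [[I, B],[Bᵀ, I]]. Then the function B ↦ μ_B(F × G) of B ∈ ℝ^{k×k} has a strict local minimum at B = 0. -/

import Mathlib

open MeasureTheory Matrix Real

/-- One-dimensional Brunn–Minkowski inequality for midpoints. -/
theorem volume_add_volume_le_of_midpoint_mem {A B C : Set ℝ} (hA : MeasurableSet A)
    (hB : MeasurableSet B) (hA' : A.Nonempty) (hB' : B.Nonempty)
    (h : ∀ a ∈ A, ∀ b ∈ B, (1 / 2 : ℝ) * (a + b) ∈ C) :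
    volume A + volume B ≤ 2 * volume C := by
  have key : ∀ K ⊆ A, IsCompact K → ∀ K' ⊆ B, IsCompact K' →
      volume K + volume K' ≤ 2 * volume C := by
    have aux : ∀ K ⊆ A, IsCompact K → K.Nonempty → ∀ K' ⊆ B, IsCompact K' → K'.Nonempty →
        volume K + volume K' ≤ 2 * volume C := by
      intro K hK hKc hKn K' hK' hKc' hKn'
      obtain ⟨p, hp, hp'⟩ := hKc.exists_isGreatest hKn
      obtain ⟨q, hq, hq'⟩ := hKc'.exists_isLeast hKn'
      have h1 : volume ((fun x => x - q) ⁻¹' K ∪ (fun x => x - p) ⁻¹' K') =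
          volume K + volume K' := by
        rw [measure_union₀ (hKc'.measurableSet.preimage (by fun_prop)).nullMeasurableSet]
        · simp [sub_eq_add_neg, measure_preimage_add_right]
        · refine measure_mono_null (t := {p + q}) ?_ (by simp)
          rintro x ⟨hx, hx'⟩
          have := hp' hx
          have := hq' hx'
          simp only [Set.mem_singleton_iff]
          linarith
      have h2 : 2 * volume C = volume ((fun x => (1 / 2 : ℝ) * x) ⁻¹' C) := by
        rw [Real.volume_preimage_mul_left (by norm_num)]
        norm_num
      rw [← h1, h2]
      apply measure_mono
      rintro x (hx | hx)
      · simpa using h _ (hK hx) _ (hK' hq)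
      · simpa using h _ (hK hp) _ (hK' hx)
    intro K hK hKc K' hK' hKc'
    obtain ⟨a, ha⟩ := hA'
    obtain ⟨b, hb⟩ := hB'
    have := aux (insert a K) (Set.insert_subset ha hK) (hKc.insert a) ⟨a, by simp⟩
      (insert b K') (Set.insert_subset hb hK') (hKc'.insert b) ⟨b, by simp⟩
    exact le_trans (add_le_add (measure_mono (Set.subset_insert _ _))
      (measure_mono (Set.subset_insert _ _))) this
  rw [hA.measure_eq_iSup_isCompact, hB.measure_eq_iSup_isCompact]
  refine ENNReal.biSup_add_biSup_le' (p := fun K => K ⊆ A) (q := fun K => K ⊆ B)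
    ⟨∅, by simp⟩ ⟨∅, by simp⟩ fun K hK K' hK' => ?_
  by_cases hKc : IsCompact K <;> by_cases hKc' : IsCompact K'
  · simpa [hKc, hKc'] using key K hK hKc K' hK' hKc'
  · simpa [hKc, hKc'] using key K hK hKc ∅ (by simp) (by simp)
  · simpa [hKc, hKc'] using key ∅ (by simp) (by simp) K' hK' hKc'
  · simp [hKc, hKc']

theorem lintegral_mul_lintegral_le_sq_of_nnreal_simpleFunc (φ ψ : SimpleFunc ℝ NNReal)
    {h : ℝ → ENNReal} (hh : Measurable h)
    (H : ∀ x y, (φ x : ENNReal) * ψ y ≤ h ((1 / 2 : ℝ) * (x + y)) ^ 2) :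
    (∫⁻ x, φ x) * ∫⁻ x, ψ x ≤ (∫⁻ x, h x) ^ 2 := by
  have hmax : ∀ φ : SimpleFunc ℝ NNReal, ∃ x, ∀ y, φ y ≤ φ x := by
    intro φ
    obtain ⟨a, ha, ha'⟩ := φ.range.exists_max_image id ⟨φ 0, by simp⟩
    obtain ⟨x, rfl⟩ := SimpleFunc.mem_range.1 ha
    exact ⟨x, fun y => ha' _ (SimpleFunc.mem_range.2 ⟨y, rfl⟩)⟩
  obtain ⟨x₀, hx₀⟩ := hmax φ
  obtain ⟨y₀, hy₀⟩ := hmax ψ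
  rcases eq_or_ne (φ x₀) 0 with hA | hA
  · have : ∀ x, φ x = 0 := fun x => le_antisymm (hA ▸ hx₀ x) zero_le
    simp [this]
  rcases eq_or_ne (ψ y₀) 0 with hB | hB
  · have : ∀ x, ψ x = 0 := fun x => le_antisymm (hB ▸ hy₀ x) zero_le
    simp [this]
  have hA0 : (0 : ℝ) < φ x₀ := by positivity
  have hB0 : (0 : ℝ) < ψ y₀ := by positivity
  have hC0 : 0 < √((φ x₀ : ℝ) * ψ y₀) := by positivity
  set a : ℝ := NNReal.toReal (φ x₀)
  set b : ℝ := NNReal.toReal (ψ y₀)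
  set c : ℝ := √(a * b)
  have hc2 : c ^ 2 = a * b := Real.sq_sqrt (by positivity)
  let k : ℝ → ℝ := fun x => (min (h x) (ENNReal.ofReal c)).toReal / c
  have hkm : Measurable k := by unfold k; fun_prop
  have hk0 : ∀ x, 0 ≤ k x := fun x => by unfold k; positivity
  have layer : ∀ (u : ℝ → ℝ), Measurable u → (∀ x, 0 ≤ u x) →
      ∫⁻ x, ENNReal.ofReal (u x) = ∫⁻ t in Set.Ioi (0 : ℝ), volume {x | t < u x} :=
    fun u hu hu' => lintegral_eq_lintegral_meas_lt _ (Filter.Eventually.of_forall hu')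
      hu.aemeasurable
  have hφm : Measurable fun x => (φ x : ℝ) / a := (φ.measurable.coe_nnreal_real).div_const _
  have hψm : Measurable fun x => (ψ x : ℝ) / b := (ψ.measurable.coe_nnreal_real).div_const _
  have hφ1 : ∀ x, (φ x : ℝ) / a ≤ 1 := fun x => (div_le_one hA0).2 (by exact_mod_cast hx₀ x)
  have hψ1 : ∀ x, (ψ x : ℝ) / b ≤ 1 := fun x => (div_le_one hB0).2 (by exact_mod_cast hy₀ x)
  have hlt : ∀ x y t, 0 < t → t < (φ x : ℝ) / a → t < (ψ y : ℝ) / b →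
      t < k ((1 / 2 : ℝ) * (x + y)) := by
    intro x y t ht hx hy
    unfold k
    rw [lt_div_iff₀ hC0, ← ENNReal.ofReal_lt_iff_lt_toReal (by positivity) (by simp)]
    rw [lt_min_iff]
    have ht1 : t < 1 := hx.trans_le (hφ1 x)
    constructor
    · refine lt_of_not_ge fun hle => (pow_le_pow_left' hle 2).not_gt (lt_of_lt_of_le ?_ (H x y))
      rw [← ENNReal.ofReal_pow (by positivity), ← ENNReal.ofReal_coe_nnreal,
        ← ENNReal.ofReal_coe_nnreal, ← ENNReal.ofReal_mul (by positivity)]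
      rw [lt_div_iff₀ hA0] at hx
      rw [lt_div_iff₀ hB0] at hy
      have : (t * c) ^ 2 < φ x * ψ y := by
        calc (t * c) ^ 2 = (t * a) * (t * b) := by rw [mul_pow, hc2]; ring
          _ < _ := mul_lt_mul'' hx hy (by positivity) (by positivity)
      exact (ENNReal.ofReal_lt_ofReal_iff (lt_of_le_of_lt (sq_nonneg _) this)).2 this
    · exact (ENNReal.ofReal_lt_ofReal_iff hC0).2 (by nlinarith)
  have hmain : (∫⁻ x, ENNReal.ofReal ((φ x : ℝ) / a)) + ∫⁻ x, ENNReal.ofReal ((ψ x : ℝ) / b) ≤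
      2 * ∫⁻ x, ENNReal.ofReal (k x) := by
    rw [layer _ hφm (fun x => by positivity), layer _ hψm (fun x => by positivity),
      layer _ hkm hk0, ← lintegral_const_mul' _ _ (by simp), ← lintegral_add_left']
    · refine setLIntegral_mono' measurableSet_Ioi fun t ht => ?_
      have ht : 0 < t := ht
      rcases lt_or_ge t 1 with ht1 | ht1
      · refine volume_add_volume_le_of_midpoint_mem (measurableSet_lt measurable_const hφm)
          (measurableSet_lt measurable_const hψm) ⟨x₀, ?_⟩ ⟨y₀, ?_⟩ ?_
        · change t < a / a
          rwa [div_self hA0.ne']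
        · change t < b / b
          rwa [div_self hB0.ne']
        · intro x hx y hy
          exact hlt x y t ht hx hy
      · have e1 : {x | t < (φ x : ℝ) / a} = ∅ := by
          ext x; simpa using (hφ1 x).trans ht1
        have e2 : {x | t < (ψ x : ℝ) / b} = ∅ := by
          ext x; simpa using (hψ1 x).trans ht1
        simp [e1, e2]
    · refine Antitone.measurable ?_ |>.aemeasurable
      intro s t hst
      exact measure_mono fun x hx => lt_of_le_of_lt hst hx
  have amgm : ∀ p q r : ENNReal, p + q ≤ 2 * r → p * q ≤ r ^ 2 := by
    intro p q r hpq
    rcases eq_or_ne r ⊤ with rfl | hr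
    · simp
    have hpt : p ≠ ⊤ := by rintro rfl; simp [ENNReal.mul_eq_top, hr] at hpq
    have hqt : q ≠ ⊤ := by rintro rfl; simp [ENNReal.mul_eq_top, hr] at hpq
    lift p to NNReal using hpt
    lift q to NNReal using hqt
    lift r to NNReal using hr
    have h1 : (p : ℝ) + q ≤ 2 * r := by exact_mod_cast hpq
    have : (p : ℝ) * q ≤ r ^ 2 := by
      nlinarith [sq_nonneg ((p : ℝ) - q), p.2, q.2, r.2, p.coe_nonneg, q.coe_nonneg]
    exact_mod_cast this
  have scale : ∀ (φ : SimpleFunc ℝ NNReal) (a : ℝ), 0 < a →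
      ∫⁻ x, (φ x : ENNReal) = ENNReal.ofReal a * ∫⁻ x, ENNReal.ofReal ((φ x : ℝ) / a) := by
    intro φ a ha
    rw [← lintegral_const_mul' _ _ (by simp)]
    refine lintegral_congr fun x => ?_
    rw [← ENNReal.ofReal_mul ha.le, mul_div_cancel₀ _ ha.ne', ENNReal.ofReal_coe_nnreal]
  have hkh : ENNReal.ofReal c * ∫⁻ x, ENNReal.ofReal (k x) ≤ ∫⁻ x, h x := by
    rw [← lintegral_const_mul' _ _ (by simp)]
    refine lintegral_mono fun x => ?_
    change ENNReal.ofReal c * ENNReal.ofReal (k x) ≤ h x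
    rw [← ENNReal.ofReal_mul hC0.le, mul_div_cancel₀ _ hC0.ne', ENNReal.ofReal_toReal]
    · exact min_le_left _ _
    · simp
  rw [scale φ a hA0, scale ψ b hB0]
  calc _ = ENNReal.ofReal c ^ 2 * ((∫⁻ x, ENNReal.ofReal ((φ x : ℝ) / a)) *
        ∫⁻ x, ENNReal.ofReal ((ψ x : ℝ) / b)) := by
        rw [← ENNReal.ofReal_pow hC0.le, hc2, ENNReal.ofReal_mul hA0.le]; ring
    _ ≤ ENNReal.ofReal c ^ 2 * (∫⁻ x, ENNReal.ofReal (k x)) ^ 2 := by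
        gcongr; exact amgm _ _ _ hmain
    _ ≤ _ := by rw [← mul_pow]; gcongr

/-- One-dimensional Prékopa–Leindler inequality for midpoints. -/
theorem lintegral_mul_lintegral_le_sq_real {f g h : ℝ → ENNReal} (hh : Measurable h)
    (H : ∀ x y, f x * g y ≤ h ((1 / 2 : ℝ) * (x + y)) ^ 2) :
    (∫⁻ x, f x) * ∫⁻ x, g x ≤ (∫⁻ x, h x) ^ 2 := by
  rw [lintegral_eq_nnreal f, lintegral_eq_nnreal g]
  simp only [ENNReal.iSup_mul, ENNReal.mul_iSup, iSup_le_iff]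
  intro ψ hψ φ hφ
  have := lintegral_mul_lintegral_le_sq_of_nnreal_simpleFunc φ ψ hh
    (fun x y => (mul_le_mul' (hφ x) (hψ y)).trans (H x y))
  rw [← SimpleFunc.lintegral_eq_lintegral, ← SimpleFunc.lintegral_eq_lintegral] 
  simpa using this

/-- Prékopa–Leindler inequality for midpoints. -/
theorem lintegral_mul_lintegral_le_sq {n : ℕ} {f g h : (Fin n → ℝ) → ENNReal}
    (hf : Measurable f) (hg : Measurable g) (hh : Measurable h)
    (H : ∀ x y, f x * g y ≤ h ((1 / 2 : ℝ) • (x + y)) ^ 2) :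
    (∫⁻ x, f x) * ∫⁻ x, g x ≤ (∫⁻ x, h x) ^ 2 := by
  induction n with
  | zero =>
    have : ∀ u : (Fin 0 → ℝ) → ENNReal, ∫⁻ x, u x = u 0 := by
      intro u
      rw [volume_pi, Measure.pi_of_empty _ 0, lintegral_dirac]
    simpa [this] using H 0 0
  | succ n ih =>
    have e := (volume_preserving_piFinSuccAbove (fun _ : Fin (n + 1) => ℝ) 0).symm
    have fub : ∀ u : (Fin (n + 1) → ℝ) → ENNReal, Measurable u →
        ∫⁻ x, u x = ∫⁻ s : ℝ, ∫⁻ z : Fin n → ℝ, u (Fin.cons s z) := by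
      intro u hu
      rw [← e.lintegral_comp hu, Measure.volume_eq_prod, lintegral_prod]
      · simp [MeasurableEquiv.piFinSuccAbove, Fin.insertNthEquiv]
      · exact (hu.comp e.measurable).aemeasurable
    have hcons : Measurable fun p : ℝ × (Fin n → ℝ) => (Fin.cons p.1 p.2 : Fin (n + 1) → ℝ) := by
      convert e.measurable using 1
      ext p
      simp [MeasurableEquiv.piFinSuccAbove, Fin.insertNthEquiv]
    have slice : ∀ (u : (Fin (n + 1) → ℝ) → ENNReal), Measurable u → ∀ s : ℝ,
        Measurable fun z : Fin n → ℝ => u (Fin.cons s z) := fun u hu s =>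
      hu.comp (hcons.comp measurable_prodMk_left)
    rw [fub f hf, fub g hg, fub h hh]
    refine lintegral_mul_lintegral_le_sq_real
      (Measurable.lintegral_prod_right' (hh.comp hcons)) fun s t => ?_
    refine ih (slice f hf s) (slice g hg t) (slice h hh _) fun x y => ?_
    convert H (Fin.cons s x) (Fin.cons t y) using 3
    ext i
    refine Fin.cases ?_ (fun i => ?_) i <;> simp [mul_add]

theorem one_add_sq_div_two_le_cosh (x : ℝ) : 1 + x ^ 2 / 2 ≤ cosh x := by
  have h : (x / 2) ^ 2 ≤ sinh (x / 2) ^ 2 := by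
    rcases le_total 0 x with hx | hx
    · exact pow_le_pow_left₀ (by linarith) (Real.self_le_sinh_iff.2 (by linarith)) 2
    · have := pow_le_pow_left₀ (show 0 ≤ -(x / 2) by linarith)
        (Real.self_le_sinh_iff.2 (show 0 ≤ -(x / 2) by linarith)) 2
      simpa [Real.sinh_neg] using this
  have h2 : cosh x = 1 + 2 * sinh (x / 2) ^ 2 := by
    have := Real.cosh_two_mul (x / 2)
    rw [mul_div_cancel₀ _ two_ne_zero] at this
    rw [this, Real.cosh_sq]; ring
  rw [h2]; linarith

theorem abs_sinh_le_cosh (x : ℝ) : |sinh x| ≤ cosh x := by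
  rw [abs_le]
  have := Real.sinh_lt_cosh x
  have h := Real.sinh_lt_cosh (-x)
  rw [Real.sinh_neg, Real.cosh_neg] at h
  constructor <;> linarith

theorem cosh_le_exp_of_abs_le {x y : ℝ} (h : |x| ≤ y) : cosh x ≤ exp y := by
  have h0 : 0 ≤ y := (abs_nonneg x).trans h
  calc cosh x ≤ cosh y := Real.cosh_le_cosh.2 (by rwa [abs_of_nonneg h0])
    _ ≤ exp y := by
      rw [Real.cosh_eq]
      have : exp (-y) ≤ exp y := Real.exp_le_exp.2 (by linarith)
      linarith

theorem sinh_le_mul_exp {x : ℝ} : sinh x ≤ x * exp x := by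
  have h := Real.add_one_le_exp (-(2 * x))
  have h2 : exp (-x) = exp (-(2 * x)) * exp x := by rw [← Real.exp_add]; ring_nf
  rw [Real.sinh_eq, h2]
  nlinarith [Real.exp_pos x]

/-- The tilting function `t - η sinh (l t)` loses against a Gaussian at most the square of its
derivative at the midpoint. -/
theorem tilt_sub_sq_le {l R η θ a b : ℝ} (hl : 1 ≤ l) (hη : 0 ≤ η) (hθ : 0 ≤ θ)
    (hηl : η * (l * exp (l * R)) ^ 2 ≤ 1) (ha : |a| ≤ R) (hb : |b| ≤ R) :
    θ * ((a - η * sinh (l * a)) - (b - η * sinh (l * b))) - ((a - b) / 2) ^ 2 ≤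
      θ ^ 2 * (1 - η * (l * cosh (l * ((a + b) / 2)))) ^ 2 := by
  rw [abs_le] at ha hb
  obtain ⟨m, d, rfl, rfl⟩ : ∃ m d, a = m + d ∧ b = m - d :=
    ⟨(a + b) / 2, (a - b) / 2, by ring, by ring⟩
  have e1 : (m + d + (m - d)) / 2 = m := by ring
  have e2 : (m + d - (m - d)) / 2 = d := by ring
  have e3 : (m + d - η * sinh (l * (m + d))) - (m - d - η * sinh (l * (m - d))) =
      2 * (d - η * (cosh (l * m) * sinh (l * d))) := by
    rw [mul_add, mul_sub, Real.sinh_add, Real.sinh_sub]; ring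
  rw [e1, e2, e3]
  have hc : 0 < cosh (l * m) := Real.cosh_pos _
  rcases le_total 0 d with hd | hd
  · have hs : l * d ≤ sinh (l * d) := Real.self_le_sinh_iff.2 (by positivity)
    have : d - η * (cosh (l * m) * sinh (l * d)) ≤ d * (1 - η * (l * cosh (l * m))) := by
      have := mul_le_mul_of_nonneg_left hs (mul_nonneg hη hc.le)
      nlinarith
    nlinarith [mul_le_mul_of_nonneg_left this hθ,
      sq_nonneg (d - θ * (1 - η * (l * cosh (l * m))))]
  · have hR : 0 ≤ R := by linarith
    have hE : cosh (l * m) ≤ exp (l * R) := by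
      apply cosh_le_exp_of_abs_le
      rw [abs_mul, abs_of_nonneg (by linarith : 0 ≤ l)]
      exact mul_le_mul_of_nonneg_left (abs_le.2 ⟨by linarith, by linarith⟩) (by linarith)
    have hE' : exp (l * -d) ≤ exp (l * R) :=
      Real.exp_le_exp.2 (mul_le_mul_of_nonneg_left (by linarith) (by linarith))
    have hs : sinh (l * -d) ≤ l * -d * exp (l * R) :=
      sinh_le_mul_exp.trans (mul_le_mul_of_nonneg_left hE'
        (mul_nonneg (by linarith) (by linarith)))
    have hs0 : 0 ≤ sinh (l * -d) :=
      Real.sinh_nonneg_iff.2 (mul_nonneg (by linarith) (by linarith))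
    have h1 : η * (cosh (l * m) * sinh (l * -d)) ≤ -d := by
      calc η * (cosh (l * m) * sinh (l * -d))
          ≤ η * (exp (l * R) * (l * -d * exp (l * R))) := by gcongr
        _ = (η * (l * exp (l * R) ^ 2)) * -d := by ring
        _ ≤ 1 * -d := by
          refine mul_le_mul_of_nonneg_right (le_trans ?_ hηl) (by linarith)
          rw [mul_pow]
          gcongr
          nlinarith
        _ = -d := one_mul _
    rw [mul_neg, Real.sinh_neg] at h1
    have : θ * (2 * (d - η * (cosh (l * m) * sinh (l * d)))) ≤ 0 :=
      mul_nonpos_of_nonneg_of_nonpos hθ (by linarith)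
    nlinarith [sq_nonneg d, sq_nonneg (θ * (1 - η * (l * cosh (l * m))))]

theorem sq_sub_one_add_le_tilt_sq_sub {R η t : ℝ} (hη : 0 ≤ η)
    (hηl : η * ((R + 1) * exp ((R + 1) * R)) ^ 2 ≤ 1) (ht : |t| ≤ R) :
    t ^ 2 - 1 + η ≤ (t - η * sinh ((R + 1) * t)) ^ 2 -
      (1 - η * ((R + 1) * cosh ((R + 1) * t))) ^ 2 := by
  have hR : 0 ≤ R := (abs_nonneg t).trans ht
  have hs := abs_sinh_le_cosh ((R + 1) * t)
  have hc := Real.one_le_cosh ((R + 1) * t)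
  have hE : cosh ((R + 1) * t) ≤ exp ((R + 1) * R) := by
    apply cosh_le_exp_of_abs_le
    rw [abs_mul, abs_of_nonneg (by linarith : 0 ≤ R + 1)]
    gcongr
  set s := sinh ((R + 1) * t)
  set c := cosh ((R + 1) * t)
  have h1 : t * s ≤ R * c := by
    calc t * s ≤ |t * s| := le_abs_self _
      _ = |t| * |s| := abs_mul _ _
      _ ≤ R * c := by gcongr
  have h2 : η * ((R + 1) * c) ^ 2 ≤ 1 := le_trans (by gcongr) hηl
  have h3 := mul_le_mul_of_nonneg_left h2 hη
  nlinarith [mul_le_mul_of_nonneg_left (show 1 ≤ (R + 1) * c - t * s by linarith) hη,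
    sq_nonneg (η * s)]

theorem le_cosh_sub_exp_of_sq_le {η g P T : ℝ} (hη0 : 0 ≤ η) (hη1 : η ≤ 1) (hP0 : 0 ≤ P)
    (hP1 : P ≤ 1) (h : T - 1 + η ≤ g ^ 2 - P) :
    η ^ 2 / 2 * (η / 2 - (1 - T)) ≤ cosh (η * g) - exp (η ^ 2 * P / 2) := by
  have h1 := one_add_sq_div_two_le_cosh (η * g)
  have hη2 : η ^ 2 ≤ η := by nlinarith
  set q := η ^ 2 * P / 2 with hq
  have hq0 : 0 ≤ q := by positivity
  have hq1 : q ≤ η ^ 2 / 2 := by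
    have := mul_le_mul_of_nonneg_left hP1 (sq_nonneg η)
    linarith
  have h3 := (abs_le.1 (Real.abs_exp_sub_one_sub_id_le (x := q)
    (by rw [abs_of_nonneg hq0]; linarith))).2
  have h4 : q ^ 2 ≤ η ^ 2 * η / 4 := by
    have := mul_le_mul_of_nonneg_left hη2 (sq_nonneg η)
    calc q ^ 2 ≤ (η ^ 2 / 2) ^ 2 := by gcongr
      _ ≤ _ := by linarith
  have h5 := mul_le_mul_of_nonneg_left h (show 0 ≤ η ^ 2 / 2 by positivity)
  linarith

theorem setIntegral_neg_of_neg_mem {n : ℕ} {K : Set (Fin n → ℝ)} (hK : ∀ x ∈ K, -x ∈ K)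
    (f : (Fin n → ℝ) → ℝ) : ∫ x in K, f (-x) = ∫ x in K, f x := by
  have h := (Measure.measurePreserving_neg (volume : Measure (Fin n → ℝ))).setIntegral_preimage_emb
    (MeasurableEquiv.neg _).measurableEmbedding f K
  have hK' : Neg.neg ⁻¹' K = K := by
    ext x
    exact ⟨fun h => by simpa using hK _ h, fun h => hK _ h⟩
  rwa [hK'] at h

theorem setIntegral_mul_setIntegral_le_sq {n : ℕ} {K : Set (Fin n → ℝ)} (hK : IsCompact K)
    (hconv : Convex ℝ K) {f g h : (Fin n → ℝ) → ℝ} (hf : Continuous f) (hg : Continuous g)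
    (hh : Continuous h) (hf0 : ∀ x, 0 ≤ f x) (hg0 : ∀ x, 0 ≤ g x) (hh0 : ∀ x, 0 ≤ h x)
    (H : ∀ x ∈ K, ∀ y ∈ K, f x * g y ≤ h ((1 / 2 : ℝ) • (x + y)) ^ 2) :
    (∫ x in K, f x) * ∫ x in K, g x ≤ (∫ x in K, h x) ^ 2 := by
  have key : ∀ f : (Fin n → ℝ) → ℝ, Continuous f → (∀ x, 0 ≤ f x) →
      ENNReal.ofReal (∫ x in K, f x) = ∫⁻ x, K.indicator (fun x => ENNReal.ofReal (f x)) x := by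
    intro f hf hf0
    rw [lintegral_indicator hK.measurableSet, ofReal_integral_eq_lintegral_ofReal
      (hf.continuousOn.integrableOn_compact hK) (Filter.Eventually.of_forall hf0)]
  have meas : ∀ f : (Fin n → ℝ) → ℝ, Continuous f →
      Measurable (K.indicator fun x => ENNReal.ofReal (f x)) := fun f hf =>
    hf.measurable.ennreal_ofReal.indicator hK.measurableSet
  have := lintegral_mul_lintegral_le_sq (meas f hf) (meas g hg) (meas h hh) fun x y => by
    by_cases hx : x ∈ K
    · by_cases hy : y ∈ K
      · have hm : (1 / 2 : ℝ) • (x + y) ∈ K := by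
          rw [smul_add]
          exact hconv hx hy (by norm_num) (by norm_num) (by norm_num)
        rw [Set.indicator_of_mem hx, Set.indicator_of_mem hy, Set.indicator_of_mem hm,
          ← ENNReal.ofReal_mul (hf0 x), ← ENNReal.ofReal_pow (hh0 _)]
        exact ENNReal.ofReal_le_ofReal (H x hx y hy)
      · simp [Set.indicator_of_notMem hy]
    · simp [Set.indicator_of_notMem hx]
  rw [← key f hf hf0, ← key g hg hg0, ← key h hh hh0,
    ← ENNReal.ofReal_mul (integral_nonneg hf0), ← ENNReal.ofReal_pow (integral_nonneg hh0)] at this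
  exact (ENNReal.ofReal_le_ofReal_iff (sq_nonneg _)).1 this

theorem setIntegral_exp_pos {n : ℕ} {K : Set (Fin n → ℝ)} (hK : IsCompact K)
    (hint : (interior K).Nonempty) : 0 < ∫ x in K, exp (-(1 / 2) * (x ⬝ᵥ x)) := by
  have hv : volume K ≠ 0 := fun h0 =>
    (isOpen_interior.measure_pos volume hint).ne' (measure_mono_null interior_subset h0)
  rw [setIntegral_pos_iff_support_of_nonneg_ae (Filter.Eventually.of_forall fun x =>
    (Real.exp_pos _).le)]
  · rw [Function.support_eq_univ fun x => (Real.exp_pos _).ne', Set.univ_inter]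
    exact pos_iff_ne_zero.2 hv
  · exact Continuous.continuousOn (by unfold dotProduct; fun_prop) |>.integrableOn_compact hK

/-- A centrally symmetric convex body has, under the Gaussian weight, second moment strictly less
than one in every unit direction. -/
theorem setIntegral_one_sub_sq_pos {n : ℕ} {K : Set (Fin n → ℝ)} (hK : IsCompact K)
    (hconv : Convex ℝ K) (hsymm : ∀ x ∈ K, -x ∈ K) (hint : (interior K).Nonempty)
    {u : Fin n → ℝ} (hu : u ⬝ᵥ u = 1) :
    0 < ∫ x in K, (1 - (u ⬝ᵥ x) ^ 2) * exp (-(1 / 2) * (x ⬝ᵥ x)) := by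
  have hucont : Continuous fun x : Fin n → ℝ => u ⬝ᵥ x := by unfold dotProduct; fun_prop
  have hxcont : Continuous fun x : Fin n → ℝ => x ⬝ᵥ x := by unfold dotProduct; fun_prop
  obtain ⟨R, hR⟩ : ∃ R, ∀ x ∈ K, |u ⬝ᵥ x| ≤ R := by
    obtain ⟨R, hR⟩ := hK.exists_bound_of_continuousOn hucont.continuousOn
    exact ⟨R, hR⟩
  have hR0 : 0 ≤ R := by
    obtain ⟨x, hx⟩ := hint
    exact (abs_nonneg _).trans (hR x (interior_subset hx))
  set E := ((R + 1) * exp ((R + 1) * R)) ^ 2 with hE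
  have hE1 : 1 ≤ E := by
    have : 1 ≤ exp ((R + 1) * R) := Real.one_le_exp (by positivity)
    exact one_le_pow₀ (by nlinarith)
  obtain ⟨η, hη0, hη1, hηE⟩ : ∃ η : ℝ, 0 < η ∧ η ≤ 1 ∧ η * E ≤ 1 :=
    ⟨E⁻¹, by positivity, inv_le_one_of_one_le₀ hE1, by rw [inv_mul_cancel₀ (by positivity)]⟩
  let g : ℝ → ℝ := fun t => t - η * sinh ((R + 1) * t)
  let p : ℝ → ℝ := fun t => 1 - η * ((R + 1) * cosh ((R + 1) * t))
  have hg : Continuous g := by unfold g; fun_prop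
  have hp : Continuous p := by unfold p; fun_prop
  let w : (Fin n → ℝ) → ℝ := fun x => exp (-(1 / 2) * (x ⬝ᵥ x))
  have hw : Continuous w := by unfold w; fun_prop
  have hgneg : ∀ t, g (-t) = -g t := fun t => by
    simp only [g, mul_neg, Real.sinh_neg]; ring
  have hPL := setIntegral_mul_setIntegral_le_sq hK hconv
    (f := fun x => w x * exp (η * g (u ⬝ᵥ x))) (g := fun x => w x * exp (-(η * g (u ⬝ᵥ x))))
    (h := fun x => w x * exp (η ^ 2 * p (u ⬝ᵥ x) ^ 2 / 2)) (by fun_prop) (by fun_prop)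
    (by fun_prop) (fun x => by positivity) (fun x => by positivity) (fun x => by positivity)
    (by
      intro x hx y hy
      have h1 := tilt_sub_sq_le (l := R + 1) (by linarith) hη0.le hη0.le hηE (hR x hx) (hR y hy)
      have hmid : u ⬝ᵥ ((1 / 2 : ℝ) • (x + y)) = (u ⬝ᵥ x + u ⬝ᵥ y) / 2 := by
        rw [dotProduct_smul, dotProduct_add, smul_eq_mul]; ring
      have hcs : (u ⬝ᵥ x - u ⬝ᵥ y) ^ 2 ≤ (x - y) ⬝ᵥ (x - y) := by
        rw [← dotProduct_sub]
        have := Finset.sum_mul_sq_le_sq_mul_sq Finset.univ u (x - y)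
        have hu' : ∑ i, u i ^ 2 = 1 := by rw [← hu]; simp [dotProduct, sq]
        rw [hu', one_mul] at this
        simpa [dotProduct, sq] using this
      have hpar : ((1 / 2 : ℝ) • (x + y)) ⬝ᵥ ((1 / 2 : ℝ) • (x + y)) =
          (x ⬝ᵥ x + y ⬝ᵥ y) / 2 - ((x - y) ⬝ᵥ (x - y)) / 4 := by
        simp only [dotProduct_smul, smul_dotProduct, dotProduct_add, add_dotProduct,
          dotProduct_sub, sub_dotProduct, smul_eq_mul]
        ring
      simp only [w, hmid, hpar, ← Real.exp_add, sq (exp _)]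
      rw [Real.exp_le_exp]
      change η * (g (u ⬝ᵥ x) - g (u ⬝ᵥ y)) - _ ≤ η ^ 2 * p ((u ⬝ᵥ x + u ⬝ᵥ y) / 2) ^ 2 at h1
      linarith)
  have hint' : ∀ f : (Fin n → ℝ) → ℝ, Continuous f → IntegrableOn f K := fun f hf =>
    hf.continuousOn.integrableOn_compact hK
  have hsw : ∫ x in K, w x * exp (-(η * g (u ⬝ᵥ x))) = ∫ x in K, w x * exp (η * g (u ⬝ᵥ x)) := by
    rw [← setIntegral_neg_of_neg_mem hsymm]
    simp [w, hgneg]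
  have hle : ∫ x in K, w x * exp (η * g (u ⬝ᵥ x)) ≤
      ∫ x in K, w x * exp (η ^ 2 * p (u ⬝ᵥ x) ^ 2 / 2) := by
    rw [hsw, ← sq] at hPL
    exact le_of_sq_le_sq hPL (integral_nonneg fun x => by positivity)
  have hcosh : ∫ x in K, w x * cosh (η * g (u ⬝ᵥ x)) = ∫ x in K, w x * exp (η * g (u ⬝ᵥ x)) := by
    have : ∀ x, w x * cosh (η * g (u ⬝ᵥ x)) =
        (w x * exp (η * g (u ⬝ᵥ x)) + w x * exp (-(η * g (u ⬝ᵥ x)))) / 2 := fun x => by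
      rw [Real.cosh_eq]; ring
    simp_rw [this]
    rw [integral_div, integral_add (hint' _ (by fun_prop)) (hint' _ (by fun_prop)), hsw]
    ring
  rw [← hcosh] at hle
  have hpt : ∀ x ∈ K, η ^ 2 / 2 * (η / 2 * w x - (1 - (u ⬝ᵥ x) ^ 2) * w x) ≤
      w x * cosh (η * g (u ⬝ᵥ x)) - w x * exp (η ^ 2 * p (u ⬝ᵥ x) ^ 2 / 2) := by
    intro x hx
    have h2 : (u ⬝ᵥ x) ^ 2 - 1 + η ≤ g (u ⬝ᵥ x) ^ 2 - p (u ⬝ᵥ x) ^ 2 :=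
      sq_sub_one_add_le_tilt_sq_sub hη0.le hηE (hR x hx)
    have hcE : cosh ((R + 1) * (u ⬝ᵥ x)) ≤ exp ((R + 1) * R) := by
      apply cosh_le_exp_of_abs_le
      rw [abs_mul, abs_of_nonneg (by linarith : 0 ≤ R + 1)]
      exact mul_le_mul_of_nonneg_left (hR x hx) (by linarith)
    have hc0 := Real.cosh_pos ((R + 1) * (u ⬝ᵥ x))
    have hp0 : 0 ≤ p (u ⬝ᵥ x) := by
      have : (R + 1) * cosh ((R + 1) * (u ⬝ᵥ x)) ≤ E := by
        have e1 : 1 ≤ (R + 1) * exp ((R + 1) * R) := by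
          have : 1 ≤ exp ((R + 1) * R) := Real.one_le_exp (by positivity)
          nlinarith
        calc _ ≤ (R + 1) * exp ((R + 1) * R) := by gcongr
          _ ≤ E := by rw [hE]; nlinarith
      have := mul_le_mul_of_nonneg_left this hη0.le
      simp only [p]; linarith
    have hp1 : p (u ⬝ᵥ x) ≤ 1 := by
      simp only [p]
      have : 0 ≤ η * ((R + 1) * cosh ((R + 1) * (u ⬝ᵥ x))) := by positivity
      linarith
    have hp2 : p (u ⬝ᵥ x) ^ 2 ≤ 1 := pow_le_one₀ hp0 hp1
    have hw0 : 0 < w x := Real.exp_pos _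
    have := mul_le_mul_of_nonneg_left
      (le_cosh_sub_exp_of_sq_le hη0.le hη1 (sq_nonneg _) hp2 h2) hw0.le
    linarith
  have hfin := setIntegral_mono_on (hint' _ (by fun_prop)) (hint' _ (by fun_prop))
    hK.measurableSet hpt
  rw [integral_const_mul, integral_sub (hint' _ (by fun_prop)) (hint' _ (by fun_prop)),
    integral_sub (hint' _ (by fun_prop)) (hint' _ (by fun_prop)), integral_const_mul] at hfin
  have hpos : 0 < ∫ x in K, w x := setIntegral_exp_pos hK hint
  have hη3 : 0 < η ^ 2 / 2 := by positivity
  have : η / 2 * (∫ x in K, w x) - ∫ x in K, (1 - (u ⬝ᵥ x) ^ 2) * w x ≤ 0 := by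
    by_contra hcon
    have := mul_pos hη3 (not_le.1 hcon)
    linarith
  have : 0 < η / 2 * ∫ x in K, w x := by positivity
  change 0 < ∫ x in K, (1 - (u ⬝ᵥ x) ^ 2) * w x
  linarith

theorem Matrix.PosDef.exists_pos_mul_dotProduct_le {ι : Type*} [Fintype ι] {M : Matrix ι ι ℝ}
    (hM : M.PosDef) : ∃ c > 0, ∀ z : ι → ℝ, c * (z ⬝ᵥ z) ≤ z ⬝ᵥ (M *ᵥ z) := by
  have hcont : Continuous fun z : ι → ℝ => z ⬝ᵥ (M *ᵥ z) := by
    unfold mulVec dotProduct; fun_prop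
  have hcont' : Continuous fun z : ι → ℝ => z ⬝ᵥ z := by unfold dotProduct; fun_prop
  have hself : ∀ z : ι → ℝ, z ⬝ᵥ z = ∑ i, z i ^ 2 := fun z => by simp [dotProduct, sq]
  have hS : IsCompact {z : ι → ℝ | z ⬝ᵥ z = 1} := by
    refine (isCompact_closedBall (0 : ι → ℝ) 1).of_isClosed_subset
      (isClosed_eq hcont' continuous_const) fun z hz => ?_
    rw [mem_closedBall_zero_iff, pi_norm_le_iff_of_nonneg zero_le_one]
    intro i
    have h1 : z i ^ 2 ≤ z ⬝ᵥ z := by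
      rw [hself]
      exact Finset.single_le_sum (f := fun i => z i ^ 2) (fun i _ => sq_nonneg _)
        (Finset.mem_univ i)
    rw [show z ⬝ᵥ z = 1 from hz] at h1
    exact (sq_le_one_iff_abs_le_one _).1 h1
  have hpos : ∀ z : ι → ℝ, z ≠ 0 → 0 < z ⬝ᵥ (M *ᵥ z) := fun z hz => by
    simpa using hM.dotProduct_mulVec_pos hz
  obtain ⟨c, hc, hcS⟩ : ∃ c > 0, ∀ z : ι → ℝ, z ⬝ᵥ z = 1 → c ≤ z ⬝ᵥ (M *ᵥ z) := by
    rcases Set.eq_empty_or_nonempty {z : ι → ℝ | z ⬝ᵥ z = 1} with he | hne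
    · exact ⟨1, one_pos, fun z hz => absurd (show z ∈ {z : ι → ℝ | z ⬝ᵥ z = 1} from hz)
        (by simp [he])⟩
    · obtain ⟨z₀, hz₀, hmin⟩ := hS.exists_isMinOn hne hcont.continuousOn
      refine ⟨_, hpos z₀ ?_, fun z hz => hmin hz⟩
      rintro rfl
      simp at hz₀
  refine ⟨c, hc, fun z => ?_⟩
  rcases eq_or_ne z 0 with rfl | hz
  · simp
  have hzz : 0 < z ⬝ᵥ z := by
    rw [hself]
    obtain ⟨i, hi⟩ := Function.ne_iff.1 hz
    exact Finset.sum_pos' (fun i _ => sq_nonneg _) ⟨i, Finset.mem_univ i, by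
      have : z i ≠ 0 := hi
      positivity⟩
  have hs : √(z ⬝ᵥ z) ^ 2 = z ⬝ᵥ z := Real.sq_sqrt hzz.le
  have hs0 : 0 < √(z ⬝ᵥ z) := Real.sqrt_pos.2 hzz
  have := hcS ((√(z ⬝ᵥ z))⁻¹ • z) (by
    rw [dotProduct_smul, smul_dotProduct, smul_eq_mul, smul_eq_mul, ← mul_assoc, ← sq, inv_pow,
      hs, inv_mul_cancel₀ hzz.ne'])
  rw [mulVec_smul, dotProduct_smul, smul_dotProduct, smul_eq_mul, smul_eq_mul, ← mul_assoc, ← sq,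
    inv_pow, hs, inv_mul_eq_div, le_div_iff₀ hzz] at this
  exact this

theorem exists_pos_mul_sum_sq_le_trace {k : ℕ} {K L : Matrix (Fin k) (Fin k) ℝ} (hK : K.PosDef)
    (hL : L.PosDef) : ∃ c > 0, ∀ B : Matrix (Fin k) (Fin k) ℝ,
      c * ∑ i, ∑ j, B i j ^ 2 ≤ trace (Bᵀ * L * B * K) := by
  obtain ⟨c, hc, h⟩ := (hK.kronecker hL).exists_pos_mul_dotProduct_le
  refine ⟨c, hc, fun B => ?_⟩
  have h1 := h (vec B)
  have hKt : Kᵀ = K := (conjTranspose_eq_transpose_of_trivial K).symm.trans hK.isHermitian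
  rw [kronecker_mulVec_vec, vec_dotProduct_vec, vec_dotProduct_vec, hKt] at h1
  convert h1 using 2
  · simp only [trace, diag_apply, mul_apply, transpose_apply, sq]
    exact Finset.sum_comm
  · simp [Matrix.mul_assoc]

theorem trace_transpose_mul_one_sub_vecMulVec {k : ℕ} (B : Matrix (Fin k) (Fin k) ℝ)
    (x y : Fin k → ℝ) :
    trace (Bᵀ * (1 - vecMulVec x x) * B * (1 - vecMulVec y y)) =
      trace (Bᵀ * B) - x ⬝ᵥ ((B * Bᵀ) *ᵥ x) - y ⬝ᵥ ((Bᵀ * B) *ᵥ y) + (x ⬝ᵥ (B *ᵥ y)) ^ 2 := by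
  have h1 : trace (Bᵀ * vecMulVec x x * B) = x ⬝ᵥ ((B * Bᵀ) *ᵥ x) := by
    rw [mul_vecMulVec, vecMulVec_mul, trace_vecMulVec, ← mulVec_mulVec, dotProduct_mulVec,
      dotProduct_comm]
  have h2 : trace (Bᵀ * B * vecMulVec y y) = y ⬝ᵥ ((Bᵀ * B) *ᵥ y) := by
    rw [mul_vecMulVec, trace_vecMulVec, dotProduct_comm]
  have h3 : trace (Bᵀ * vecMulVec x x * B * vecMulVec y y) = (x ⬝ᵥ (B *ᵥ y)) ^ 2 := by
    rw [mul_vecMulVec Bᵀ, vecMulVec_mul, vecMulVec_mul_vecMulVec, trace_vecMulVec, dotProduct_smul,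
      mulVec_transpose, ← dotProduct_mulVec, smul_eq_mul, sq]
  simp only [mul_sub, sub_mul, mul_one, trace_sub, h1, h2, h3]
  ring

theorem det_le_exp_trace_sub_card {ι : Type*} [Fintype ι] [DecidableEq ι] {M : Matrix ι ι ℝ}
    (hM : M.PosSemidef) : M.det ≤ exp (M.trace - Fintype.card ι) := by
  rw [hM.isHermitian.det_eq_prod_eigenvalues, hM.isHermitian.trace_eq_sum_eigenvalues]
  have : ∑ i, ((hM.isHermitian.eigenvalues i : ℝ)) - Fintype.card ι =
      ∑ i, (hM.isHermitian.eigenvalues i - 1) := by simp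
  simp only [RCLike.ofReal_real_eq_id, id]
  rw [this, Real.exp_sum]
  refine Finset.prod_le_prod (fun i _ => hM.eigenvalues_nonneg i) fun i _ => ?_
  linarith [Real.add_one_le_exp (hM.isHermitian.eigenvalues i - 1)]

section Frobenius

open scoped Matrix.Norms.Frobenius

theorem frobenius_norm_sq_eq_sum {k : ℕ} (A : Matrix (Fin k) (Fin k) ℝ) :
    ‖A‖ ^ 2 = ∑ i, ∑ j, A i j ^ 2 := by
  rw [Matrix.frobenius_norm_def, ← Real.sqrt_eq_rpow, Real.sq_sqrt (by positivity)]
  simp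

theorem frobenius_norm_sq_eq_trace {k : ℕ} (A : Matrix (Fin k) (Fin k) ℝ) :
    ‖A‖ ^ 2 = trace (Aᵀ * A) := by
  rw [frobenius_norm_sq_eq_sum]
  simp only [trace, diag_apply, mul_apply, transpose_apply, sq]
  exact Finset.sum_comm

theorem abs_dotProduct_mulVec_le {k : ℕ} (A : Matrix (Fin k) (Fin k) ℝ) {x y : Fin k → ℝ} {R : ℝ}
    (hx : x ⬝ᵥ x ≤ R) (hy : y ⬝ᵥ y ≤ R) : |x ⬝ᵥ (A *ᵥ y)| ≤ R * ‖A‖ := by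
  have hself : ∀ z : Fin k → ℝ, z ⬝ᵥ z = ∑ i, z i ^ 2 := fun z => by simp [dotProduct, sq]
  have hself0 : ∀ z : Fin k → ℝ, 0 ≤ z ⬝ᵥ z := fun z => by rw [hself]; positivity
  have hR : 0 ≤ R := (hself0 x).trans hx
  apply abs_le_of_sq_le_sq _ (by positivity)
  have h := Finset.sum_mul_sq_le_sq_mul_sq (Finset.univ : Finset (Fin k × Fin k))
    (fun p => A p.1 p.2) fun p => x p.1 * y p.2
  have h1 : ∑ p : Fin k × Fin k, A p.1 p.2 * (x p.1 * y p.2) = x ⬝ᵥ (A *ᵥ y) := by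
    simp only [Fintype.sum_prod_type, dotProduct, mulVec, Finset.mul_sum]
    exact Finset.sum_congr rfl fun i _ => Finset.sum_congr rfl fun j _ => by ring
  have h2 : ∑ p : Fin k × Fin k, A p.1 p.2 ^ 2 = ‖A‖ ^ 2 := by
    rw [frobenius_norm_sq_eq_sum, Fintype.sum_prod_type]
  have h3 : ∑ p : Fin k × Fin k, (x p.1 * y p.2) ^ 2 = (x ⬝ᵥ x) * (y ⬝ᵥ y) := by
    rw [Fintype.sum_prod_type, hself, hself, Finset.sum_mul_sum]
    simp [mul_pow]
  rw [h1, h2, h3] at h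
  calc (x ⬝ᵥ (A *ᵥ y)) ^ 2 ≤ ‖A‖ ^ 2 * ((x ⬝ᵥ x) * (y ⬝ᵥ y)) := h
    _ ≤ ‖A‖ ^ 2 * (R * R) := by
      have := mul_le_mul hx hy (hself0 y) hR
      gcongr
    _ = _ := by ring

theorem one_sub_mul_inv_and_norm_inv_le {k : ℕ} {P : Matrix (Fin k) (Fin k) ℝ}
    (hP : ‖P‖ ≤ 1 / 2) :
    (1 - P) * (1 - P)⁻¹ = 1 ∧ ‖(1 - P)⁻¹‖ ≤ 2 * ‖(1 : Matrix (Fin k) (Fin k) ℝ)‖ := by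
  have hu : IsUnit (1 - P) := isUnit_one_sub_of_norm_lt_one (by linarith)
  have h1 : (1 - P) * (1 - P)⁻¹ = 1 :=
    mul_nonsing_inv _ ((Matrix.isUnit_iff_isUnit_det _).1 hu)
  refine ⟨h1, ?_⟩
  have h2 : (1 - P)⁻¹ = 1 + P * (1 - P)⁻¹ := by
    rw [sub_mul, one_mul] at h1
    exact sub_eq_iff_eq_add.1 h1
  have h3 : ‖(1 - P)⁻¹‖ ≤ ‖(1 : Matrix (Fin k) (Fin k) ℝ)‖ + ‖P‖ * ‖(1 - P)⁻¹‖ := by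
    calc _ = ‖1 + P * (1 - P)⁻¹‖ := by rw [← h2]
      _ ≤ _ := (norm_add_le _ _).trans (by gcongr; exact norm_mul_le _ _)
  nlinarith [norm_nonneg (1 - P)⁻¹]

theorem posSemidef_one_sub {k : ℕ} {P : Matrix (Fin k) (Fin k) ℝ} (hP : ‖P‖ ≤ 1)
    (hsymm : Pᵀ = P) : (1 - P).PosSemidef := by
  refine .of_dotProduct_mulVec_nonneg ?_ fun x => ?_
  · rw [IsHermitian, conjTranspose_eq_transpose_of_trivial, transpose_sub, hsymm, transpose_one]
  · have h := (abs_le.1 (abs_dotProduct_mulVec_le P (le_refl (x ⬝ᵥ x)) le_rfl)).2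
    have h0 : 0 ≤ x ⬝ᵥ x := by simpa using dotProduct_star_self_nonneg x
    rw [star_trivial, sub_mulVec, one_mulVec, dotProduct_sub]
    nlinarith

/-- The covariance matrix of the pair has determinant at most `exp (-‖B‖²)`. -/
theorem det_fromBlocks_pos_and_le {k : ℕ} {B : Matrix (Fin k) (Fin k) ℝ}
    (hB : ‖Bᵀ * B‖ ≤ 1 / 2) :
    0 < (fromBlocks 1 B Bᵀ 1).det ∧ (fromBlocks 1 B Bᵀ 1).det ≤ exp (-trace (Bᵀ * B)) := by
  have hpsd : (1 - Bᵀ * B).PosSemidef :=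
    posSemidef_one_sub (by linarith) (by simp [transpose_mul])
  have hne : (1 - Bᵀ * B).det ≠ 0 :=
    ((Matrix.isUnit_iff_isUnit_det _).1
      (isUnit_one_sub_of_norm_lt_one (by linarith : ‖Bᵀ * B‖ < 1))).ne_zero
  rw [det_fromBlocks_one₁₁]
  refine ⟨lt_of_le_of_ne hpsd.det_nonneg hne.symm, ?_⟩
  convert det_le_exp_trace_sub_card hpsd using 2
  simp [trace_sub]

theorem inv_fromBlocks_eq {k : ℕ} {B : Matrix (Fin k) (Fin k) ℝ}
    (h1 : (1 - B * Bᵀ) * (1 - B * Bᵀ)⁻¹ = 1) (h2 : (1 - Bᵀ * B) * (1 - Bᵀ * B)⁻¹ = 1) :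
    (fromBlocks 1 B Bᵀ 1)⁻¹ = fromBlocks (1 - B * Bᵀ)⁻¹ (-(B * (1 - Bᵀ * B)⁻¹))
      (-(Bᵀ * (1 - B * Bᵀ)⁻¹)) (1 - Bᵀ * B)⁻¹ := by
  apply inv_eq_right_inv
  rw [fromBlocks_multiply, ← fromBlocks_one]
  congr 1
  · simp only [one_mul, mul_neg, ← sub_eq_add_neg, ← Matrix.mul_assoc]
    rwa [sub_mul, one_mul] at h1
  · simp
  · simp
  · simp only [one_mul, mul_neg, ← Matrix.mul_assoc]
    rw [sub_mul, one_mul] at h2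
    rw [neg_add_eq_sub]
    exact h2

end Frobenius

theorem one_add_half_sub_le_exp_mul_cosh {r R s p q β ex ey eb : ℝ} (hr : 0 ≤ r) (hr1 : r ≤ 1)
    (hR : 0 ≤ R) (hs : 0 ≤ s) (hp : |p| ≤ R * r ^ 2) (hq : |q| ≤ R * r ^ 2) (hβ : |β| ≤ R * r)
    (hex : |ex| ≤ 2 * s * R * r ^ 4) (hey : |ey| ≤ 2 * s * R * r ^ 4)
    (heb : |eb| ≤ 2 * s * R * r ^ 3) :
    1 + (1 / 2) * (r ^ 2 - p - q + β ^ 2) -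
        (2 * s * R + 2 * s * R ^ 2 + (1 + 2 * R + 4 * s * R) * (R + 2 * s * R) ^ 2 / 4) * r ^ 4 ≤
      exp ((1 / 2) * (r ^ 2 - p - q - ex - ey)) * cosh (β + eb) := by
  set a := (1 / 2) * (r ^ 2 - p - q - ex - ey) with ha
  have h42 : r ^ 4 ≤ r ^ 2 := pow_le_pow_of_le_one hr hr1 (by norm_num)
  have h31 : r ^ 3 ≤ r := by simpa using pow_le_pow_of_le_one hr hr1 (by norm_num : 1 ≤ 3)
  have hsR : 0 ≤ 2 * s * R := by positivity
  have h42' := mul_le_mul_of_nonneg_left h42 hsR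
  have h31' := mul_le_mul_of_nonneg_left h31 hsR
  have hb : (β + eb) ^ 2 ≤ (R + 2 * s * R) ^ 2 * r ^ 2 := by
    rw [← mul_pow]
    apply sq_le_sq'
    · linarith [(abs_le.1 hβ).1, (abs_le.1 heb).1]
    · linarith [(abs_le.1 hβ).2, (abs_le.1 heb).2]
  have hb' : β ^ 2 - 4 * s * R ^ 2 * r ^ 4 ≤ (β + eb) ^ 2 := by
    have h : |β * eb| ≤ (R * r) * (2 * s * R * r ^ 3) := by
      rw [abs_mul]; gcongr
    nlinarith [(abs_le.1 h).1, sq_nonneg eb]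
  have haA : -((1 + 2 * R + 4 * s * R) / 2 * r ^ 2) ≤ a := by
    nlinarith [(abs_le.1 hp).2, (abs_le.1 hq).2, (abs_le.1 hex).2, (abs_le.1 hey).2, sq_nonneg r]
  have hab : -((1 + 2 * R + 4 * s * R) / 2 * r ^ 2 * ((R + 2 * s * R) ^ 2 * r ^ 2)) ≤
      a * (β + eb) ^ 2 := by
    have h1 := mul_le_mul_of_nonneg_right haA (sq_nonneg (β + eb))
    have h2 := mul_le_mul_of_nonneg_left hb
      (by positivity : 0 ≤ (1 + 2 * R + 4 * s * R) / 2 * r ^ 2)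
    linarith
  calc _ ≤ (a + 1) * (1 + (β + eb) ^ 2 / 2) := by
        nlinarith [(abs_le.1 hex).2, (abs_le.1 hey).2]
    _ ≤ exp a * (1 + (β + eb) ^ 2 / 2) := by
        gcongr; exact Real.add_one_le_exp a
    _ ≤ _ := by
        gcongr; exact one_add_sq_div_two_le_cosh _

section FrobeniusDensity

open scoped Matrix.Norms.Frobenius

theorem exp_half_trace_le_inv_sqrt_det {k : ℕ} {B : Matrix (Fin k) (Fin k) ℝ}
    (hB : ‖Bᵀ * B‖ ≤ 1 / 2) :
    exp ((1 / 2) * trace (Bᵀ * B)) ≤ (√(fromBlocks 1 B Bᵀ 1).det)⁻¹ := by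
  obtain ⟨h0, h1⟩ := det_fromBlocks_pos_and_le hB
  rw [← neg_neg ((1 / 2) * trace (Bᵀ * B)), Real.exp_neg]
  refine inv_anti₀ (Real.sqrt_pos.2 h0) ((Real.sqrt_le_left (exp_pos _).le).2 ?_)
  rw [← Real.exp_nat_mul]
  refine h1.trans_eq ?_
  congr 1
  push_cast
  ring

theorem sumElim_dotProduct_inv_fromBlocks_mulVec {k : ℕ} {B : Matrix (Fin k) (Fin k) ℝ}
    (h1 : (1 - B * Bᵀ) * (1 - B * Bᵀ)⁻¹ = 1) (h2 : (1 - Bᵀ * B) * (1 - Bᵀ * B)⁻¹ = 1)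
    (x y : Fin k → ℝ) :
    Sum.elim x y ⬝ᵥ ((fromBlocks 1 B Bᵀ 1)⁻¹ *ᵥ Sum.elim x y) =
      x ⬝ᵥ ((1 - B * Bᵀ)⁻¹ *ᵥ x) + y ⬝ᵥ ((1 - Bᵀ * B)⁻¹ *ᵥ y) -
        (x ⬝ᵥ ((B * (1 - Bᵀ * B)⁻¹) *ᵥ y) + y ⬝ᵥ ((Bᵀ * (1 - B * Bᵀ)⁻¹) *ᵥ x)) := by
  rw [inv_fromBlocks_eq h1 h2, fromBlocks_mulVec]
  simp only [Sum.elim_comp_inl, Sum.elim_comp_inr, sumElim_dotProduct_sumElim, dotProduct_add,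
    neg_mulVec, dotProduct_neg]
  ring

/-- The density of the centred Gaussian measure with covariance `[[I, B], [Bᵀ, I]]`. -/
noncomputable def pairDensity {k : ℕ} (B : Matrix (Fin k) (Fin k) ℝ) (x y : Fin k → ℝ) : ℝ :=
  ((2 * π) ^ k * Real.sqrt (Matrix.fromBlocks 1 B Bᵀ 1).det)⁻¹ *
    Real.exp (-(1/2) *
      (Sum.elim x y ⬝ᵥ ((Matrix.fromBlocks 1 B Bᵀ 1)⁻¹ *ᵥ Sum.elim x y)))

/-- Expansion of the density of the pair, symmetrised in the first variable. -/
theorem exists_le_density_add_density_neg (k : ℕ) {R : ℝ} (hR : 0 ≤ R) :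
    ∃ C, 0 ≤ C ∧ ∀ B : Matrix (Fin k) (Fin k) ℝ, ∑ i, ∑ j, B i j ^ 2 ≤ 1 / 4 →
      ∀ x y : Fin k → ℝ, x ⬝ᵥ x ≤ R → y ⬝ᵥ y ≤ R →
      ((2 * π) ^ k)⁻¹ * ((1 + (1 / 2) * trace (Bᵀ * (1 - vecMulVec x x) * B * (1 - vecMulVec y y)) -
          C * (∑ i, ∑ j, B i j ^ 2) ^ 2) *
            (exp (-(1 / 2) * (x ⬝ᵥ x)) * exp (-(1 / 2) * (y ⬝ᵥ y)))) ≤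
        (1 / 2) * (pairDensity B x y + pairDensity B (-x) y) := by
  set s := ‖(1 : Matrix (Fin k) (Fin k) ℝ)‖ with hs
  have hs0 : 0 ≤ s := norm_nonneg _
  refine ⟨2 * s * R + 2 * s * R ^ 2 + (1 + 2 * R + 4 * s * R) * (R + 2 * s * R) ^ 2 / 4,
    by positivity, fun B hB x y hx hy => ?_⟩
  rw [← frobenius_norm_sq_eq_sum] at hB ⊢
  set r := ‖B‖ with hr
  have hr0 : 0 ≤ r := norm_nonneg _
  have hr1 : r ≤ 1 := by nlinarith
  have hBt : ‖Bᵀ‖ = r := frobenius_norm_transpose B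
  have hP : ‖B * Bᵀ‖ ≤ r ^ 2 := (norm_mul_le _ _).trans_eq (by rw [hBt, sq])
  have hQ : ‖Bᵀ * B‖ ≤ r ^ 2 := (norm_mul_le _ _).trans_eq (by rw [hBt, sq])
  obtain ⟨hPS, hS⟩ := one_sub_mul_inv_and_norm_inv_le (hP.trans (by linarith))
  obtain ⟨hQT, hT⟩ := one_sub_mul_inv_and_norm_inv_le (hQ.trans (by linarith))
  simp only [pairDensity, sumElim_dotProduct_inv_fromBlocks_mulVec hPS hQT, trace_transpose_mul_one_sub_vecMulVec,
    ← frobenius_norm_sq_eq_trace]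
  have hdet := exp_half_trace_le_inv_sqrt_det (B := B) (hQ.trans (by linarith))
  rw [← frobenius_norm_sq_eq_trace, ← hr] at hdet
  rw [← hr]
  generalize hSdef : (1 - B * Bᵀ)⁻¹ = S at *
  generalize hTdef : (1 - Bᵀ * B)⁻¹ = T at *
  rw [sub_mul, one_mul, sub_eq_iff_eq_add] at hPS hQT
  have hS2 : S = 1 + B * Bᵀ + B * Bᵀ * (B * Bᵀ * S) := by
    conv_lhs => rw [hPS, hPS, mul_add, mul_one]
    rw [add_assoc]
  have hT2 : T = 1 + Bᵀ * B + Bᵀ * B * (Bᵀ * B * T) := by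
    conv_lhs => rw [hQT, hQT, mul_add, mul_one]
    rw [add_assoc]
  have hBT : B * T = B + B * (Bᵀ * B * T) := by
    conv_lhs => rw [hQT, mul_add, mul_one]
  have hBS : Bᵀ * S = Bᵀ + Bᵀ * (B * Bᵀ * S) := by
    conv_lhs => rw [hPS, mul_add, mul_one]
  have hPSn : ‖B * Bᵀ * S‖ ≤ r ^ 2 * (2 * s) := (norm_mul_le _ _).trans (by gcongr)
  have hQTn : ‖Bᵀ * B * T‖ ≤ r ^ 2 * (2 * s) := (norm_mul_le _ _).trans (by gcongr)
  have hex : |x ⬝ᵥ ((B * Bᵀ * (B * Bᵀ * S)) *ᵥ x)| ≤ 2 * s * R * r ^ 4 :=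
    calc _ ≤ R * ‖B * Bᵀ * (B * Bᵀ * S)‖ := abs_dotProduct_mulVec_le _ hx hx
      _ ≤ R * (r ^ 2 * (r ^ 2 * (2 * s))) := by
        gcongr
        exact (norm_mul_le _ _).trans (by gcongr)
      _ = _ := by ring
  have hey : |y ⬝ᵥ ((Bᵀ * B * (Bᵀ * B * T)) *ᵥ y)| ≤ 2 * s * R * r ^ 4 :=
    calc _ ≤ R * ‖Bᵀ * B * (Bᵀ * B * T)‖ := abs_dotProduct_mulVec_le _ hy hy
      _ ≤ R * (r ^ 2 * (r ^ 2 * (2 * s))) := by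
        gcongr
        exact (norm_mul_le _ _).trans (by gcongr)
      _ = _ := by ring
  have heb1 : |x ⬝ᵥ ((B * (Bᵀ * B * T)) *ᵥ y)| ≤ 2 * s * R * r ^ 3 :=
    calc _ ≤ R * ‖B * (Bᵀ * B * T)‖ := abs_dotProduct_mulVec_le _ hx hy
      _ ≤ R * (r * (r ^ 2 * (2 * s))) := by
        gcongr
        exact (norm_mul_le _ _).trans (by gcongr)
      _ = _ := by ring
  have heb2 : |y ⬝ᵥ ((Bᵀ * (B * Bᵀ * S)) *ᵥ x)| ≤ 2 * s * R * r ^ 3 :=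
    calc _ ≤ R * ‖Bᵀ * (B * Bᵀ * S)‖ := abs_dotProduct_mulVec_le _ hy hx
      _ ≤ R * (r * (r ^ 2 * (2 * s))) := by
        gcongr
        refine (norm_mul_le _ _).trans ?_
        rw [hBt]
        gcongr
      _ = _ := by ring
  have hp : |x ⬝ᵥ ((B * Bᵀ) *ᵥ x)| ≤ R * r ^ 2 :=
    (abs_dotProduct_mulVec_le _ hx hx).trans (by gcongr)
  have hq : |y ⬝ᵥ ((Bᵀ * B) *ᵥ y)| ≤ R * r ^ 2 :=
    (abs_dotProduct_mulVec_le _ hy hy).trans (by gcongr)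
  have hβ : |x ⬝ᵥ (B *ᵥ y)| ≤ R * r := abs_dotProduct_mulVec_le _ hx hy
  have hβt : y ⬝ᵥ (Bᵀ *ᵥ x) = x ⬝ᵥ (B *ᵥ y) := by
    rw [mulVec_transpose, dotProduct_comm, ← dotProduct_mulVec]
  have hqS : x ⬝ᵥ (S *ᵥ x) = x ⬝ᵥ x + x ⬝ᵥ ((B * Bᵀ) *ᵥ x) +
      x ⬝ᵥ ((B * Bᵀ * (B * Bᵀ * S)) *ᵥ x) := by
    conv_lhs => rw [hS2]
    simp only [add_mulVec, dotProduct_add, one_mulVec]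
  have hqT : y ⬝ᵥ (T *ᵥ y) = y ⬝ᵥ y + y ⬝ᵥ ((Bᵀ * B) *ᵥ y) +
      y ⬝ᵥ ((Bᵀ * B * (Bᵀ * B * T)) *ᵥ y) := by
    conv_lhs => rw [hT2]
    simp only [add_mulVec, dotProduct_add, one_mulVec]
  simp only [mulVec_neg, dotProduct_neg, neg_dotProduct, neg_neg, hqS, hqT]
  rw [hBT, hBS]
  simp only [add_mulVec, dotProduct_add, hβt]
  generalize x ⬝ᵥ ((B * Bᵀ * (B * Bᵀ * S)) *ᵥ x) = ex at *
  generalize y ⬝ᵥ ((Bᵀ * B * (Bᵀ * B * T)) *ᵥ y) = ey at *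
  generalize x ⬝ᵥ ((B * (Bᵀ * B * T)) *ᵥ y) = eb₁ at *
  generalize y ⬝ᵥ ((Bᵀ * (B * Bᵀ * S)) *ᵥ x) = eb₂ at *
  generalize x ⬝ᵥ ((B * Bᵀ) *ᵥ x) = p at *
  generalize y ⬝ᵥ ((Bᵀ * B) *ᵥ y) = q at *
  generalize x ⬝ᵥ (B *ᵥ y) = β at *
  generalize x ⬝ᵥ x = X at *
  generalize y ⬝ᵥ y = Y at *
  have heb : |(eb₁ + eb₂) / 2| ≤ 2 * s * R * r ^ 3 := by
    rw [abs_le] at heb1 heb2 ⊢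
    constructor <;> linarith [heb1.1, heb2.1, heb1.2, heb2.2]
  have key := one_add_half_sub_le_exp_mul_cosh hr0 hr1 hR hs0 hp hq hβ hex hey heb
  rw [mul_inv, show (r ^ 2) ^ 2 = r ^ 4 by ring]
  have hid : (1 / 2) * (((2 * π) ^ k)⁻¹ * (√(fromBlocks 1 B Bᵀ 1).det)⁻¹ *
        exp (-(1 / 2) * (X + p + ex + (Y + q + ey) - (β + eb₁ + (β + eb₂)))) +
      ((2 * π) ^ k)⁻¹ * (√(fromBlocks 1 B Bᵀ 1).det)⁻¹ *
        exp (-(1 / 2) * (X + p + ex + (Y + q + ey) - (-(β + eb₁) + -(β + eb₂))))) =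
      ((2 * π) ^ k)⁻¹ * ((√(fromBlocks 1 B Bᵀ 1).det)⁻¹ * (exp (-(1 / 2) * (p + q + ex + ey)) *
        cosh (β + (eb₁ + eb₂) / 2) * (exp (-(1 / 2) * X) * exp (-(1 / 2) * Y)))) := by
    rw [Real.cosh_eq]
    rw [show -(1 / 2) * (X + p + ex + (Y + q + ey) - (β + eb₁ + (β + eb₂))) =
      -(1 / 2) * (p + q + ex + ey) + (β + (eb₁ + eb₂) / 2) + -(1 / 2) * X + -(1 / 2) * Y by ring,
      show -(1 / 2) * (X + p + ex + (Y + q + ey) - (-(β + eb₁) + -(β + eb₂))) =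
      -(1 / 2) * (p + q + ex + ey) + -(β + (eb₁ + eb₂) / 2) + -(1 / 2) * X + -(1 / 2) * Y by ring]
    simp only [Real.exp_add]
    ring
  have hexp : exp ((1 / 2) * (r ^ 2 - p - q - ex - ey)) =
      exp ((1 / 2) * r ^ 2) * exp (-(1 / 2) * (p + q + ex + ey)) := by
    rw [← Real.exp_add]; congr 1; ring
  refine le_of_le_of_eq ?_ hid.symm
  have hcosh : 0 < cosh (β + (eb₁ + eb₂) / 2) := Real.cosh_pos _
  have hmain := key.trans_eq (by rw [hexp])
  have hstep : exp ((1 / 2) * r ^ 2) * exp (-(1 / 2) * (p + q + ex + ey)) *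
      cosh (β + (eb₁ + eb₂) / 2) ≤ (√(fromBlocks 1 B Bᵀ 1).det)⁻¹ *
        (exp (-(1 / 2) * (p + q + ex + ey)) * cosh (β + (eb₁ + eb₂) / 2)) := by
    rw [mul_assoc]
    gcongr
  calc _ ≤ ((2 * π) ^ k)⁻¹ * ((√(fromBlocks 1 B Bᵀ 1).det)⁻¹ *
        (exp (-(1 / 2) * (p + q + ex + ey)) * cosh (β + (eb₁ + eb₂) / 2)) *
        (exp (-(1 / 2) * X) * exp (-(1 / 2) * Y))) := by
        have := hmain.trans hstep
        gcongr
    _ = _ := by ring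

end FrobeniusDensity

/-- The second-moment defect `∫ (1 - x xᵀ) e^{-|x|²/2}` of the standard Gaussian on `K`. -/
noncomputable def gaussianMomentDefect {k : ℕ} (K : Set (Fin k → ℝ)) : Matrix (Fin k) (Fin k) ℝ :=
  .of fun i j => ∫ x in K, (1 - vecMulVec x x : Matrix _ _ ℝ) i j * exp (-(1 / 2) * (x ⬝ᵥ x))

theorem continuous_one_sub_vecMulVec_mul_exp {k : ℕ} (i j : Fin k) :
    Continuous fun x : Fin k → ℝ =>
      (1 - vecMulVec x x : Matrix _ _ ℝ) i j * exp (-(1 / 2) * (x ⬝ᵥ x)) := by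
  simp only [Matrix.sub_apply, vecMulVec_apply, dotProduct]
  fun_prop

theorem posDef_gaussianMomentDefect {k : ℕ} {K : Set (Fin k → ℝ)} (hK : IsCompact K)
    (hconv : Convex ℝ K) (hsymm : ∀ x ∈ K, -x ∈ K) (hint : (interior K).Nonempty) :
    (gaussianMomentDefect K).PosDef := by
  refine .of_dotProduct_mulVec_pos ?_ fun v hv => ?_
  · ext i j
    have hT : ∀ x : Fin k → ℝ, (1 - vecMulVec x x : Matrix _ _ ℝ) j i =
        (1 - vecMulVec x x : Matrix _ _ ℝ) i j := fun x => by
      rw [← transpose_apply (1 - vecMulVec x x), transpose_sub, transpose_one, transpose_vecMulVec]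
    simp only [gaussianMomentDefect, conjTranspose_apply, of_apply, star_trivial, hT]
  have hq : ∀ v : Fin k → ℝ, v ⬝ᵥ (gaussianMomentDefect K *ᵥ v) =
      ∫ x in K, (v ⬝ᵥ v - (v ⬝ᵥ x) ^ 2) * exp (-(1 / 2) * (x ⬝ᵥ x)) := by
    intro v
    have hexpand : ∀ x : Fin k → ℝ, (v ⬝ᵥ v - (v ⬝ᵥ x) ^ 2) * exp (-(1 / 2) * (x ⬝ᵥ x)) =
        ∑ i, ∑ j, v i * v j *
          ((1 - vecMulVec x x : Matrix _ _ ℝ) i j * exp (-(1 / 2) * (x ⬝ᵥ x))) := by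
      intro x
      have : v ⬝ᵥ v - (v ⬝ᵥ x) ^ 2 = v ⬝ᵥ ((1 - vecMulVec x x) *ᵥ v) := by
        rw [sub_mulVec, one_mulVec, dotProduct_sub, vecMulVec_mulVec]
        simp [dotProduct_comm x v, sq]
      rw [this]
      simp only [dotProduct, mulVec, Finset.mul_sum, Finset.sum_mul]
      exact Finset.sum_congr rfl fun i _ => Finset.sum_congr rfl fun j _ => by ring
    have hi : ∀ i j : Fin k, IntegrableOn (fun x : Fin k → ℝ => v i * v j *
        ((1 - vecMulVec x x : Matrix _ _ ℝ) i j * exp (-(1 / 2) * (x ⬝ᵥ x)))) K := fun i j =>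
      (continuous_const.mul
      (continuous_one_sub_vecMulVec_mul_exp i j)).continuousOn.integrableOn_compact hK
    simp only [hexpand]
    rw [integral_finsetSum _ fun i _ => integrable_finsetSum _ fun j _ => hi i j]
    rw [dotProduct]
    conv_lhs => enter [2, i]; rw [mulVec, dotProduct, Finset.mul_sum]
    refine Finset.sum_congr rfl fun i _ => ?_
    rw [integral_finsetSum _ fun j _ => hi i j]
    refine Finset.sum_congr rfl fun j _ => ?_
    rw [integral_const_mul]
    simp only [gaussianMomentDefect, of_apply]
    ring
  rw [star_trivial]
  have hvv : 0 < v ⬝ᵥ v := by simpa using dotProduct_star_self_pos_iff.2 hv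
  have hs : √(v ⬝ᵥ v) ^ 2 = v ⬝ᵥ v := Real.sq_sqrt hvv.le
  have hs0 : 0 < √(v ⬝ᵥ v) := Real.sqrt_pos.2 hvv
  set u := (√(v ⬝ᵥ v))⁻¹ • v with hu
  have huu : u ⬝ᵥ u = 1 := by
    rw [hu, dotProduct_smul, smul_dotProduct, smul_eq_mul, smul_eq_mul, ← mul_assoc, ← sq, inv_pow,
      hs, inv_mul_cancel₀ hvv.ne']
  have hvu : v = √(v ⬝ᵥ v) • u := by
    rw [hu, smul_smul, mul_inv_cancel₀ hs0.ne', one_smul]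
  have hpos := setIntegral_one_sub_sq_pos hK hconv hsymm hint huu
  have hqu := hq u
  rw [huu] at hqu
  rw [← hqu] at hpos
  rw [hvu, mulVec_smul, dotProduct_smul, smul_dotProduct, smul_eq_mul, smul_eq_mul]
  positivity

/-- The mixed second-order term integrates to the quadratic form of the two defects. -/
theorem integral_integral_trace_eq {k : ℕ} {F G : Set (Fin k → ℝ)} (hF : IsCompact F)
    (hG : IsCompact G) (B : Matrix (Fin k) (Fin k) ℝ) :
    ∫ x in F, ∫ y in G, trace (Bᵀ * (1 - vecMulVec x x) * B * (1 - vecMulVec y y)) *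
        (exp (-(1 / 2) * (x ⬝ᵥ x)) * exp (-(1 / 2) * (y ⬝ᵥ y))) =
      trace (Bᵀ * gaussianMomentDefect F * B * gaussianMomentDefect G) := by
  have hexpand : ∀ L M : Matrix (Fin k) (Fin k) ℝ, trace (Bᵀ * L * B * M) =
      ∑ a, ∑ b, ∑ c, ∑ d, B d a * B c b * (L d c * M b a) := by
    intro L M
    simp only [trace, diag_apply, mul_apply, transpose_apply, Finset.sum_mul]
    refine Finset.sum_congr rfl fun a _ => Finset.sum_congr rfl fun b _ =>
      Finset.sum_congr rfl fun c _ => Finset.sum_congr rfl fun d _ => by ring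
  simp only [hexpand, Finset.sum_mul]
  have hG' : ∀ (c : ℝ) (i j : Fin k), IntegrableOn (fun y : Fin k → ℝ => c *
      ((1 - vecMulVec y y : Matrix _ _ ℝ) i j * exp (-(1 / 2) * (y ⬝ᵥ y)))) G := fun c i j =>
    (continuous_const.mul
      (continuous_one_sub_vecMulVec_mul_exp i j)).continuousOn.integrableOn_compact hG
  have hF' : ∀ (c : ℝ) (i j : Fin k), IntegrableOn (fun y : Fin k → ℝ => c *
      ((1 - vecMulVec y y : Matrix _ _ ℝ) i j * exp (-(1 / 2) * (y ⬝ᵥ y)))) F := fun c i j =>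
    (continuous_const.mul
      (continuous_one_sub_vecMulVec_mul_exp i j)).continuousOn.integrableOn_compact hF
  have hinner : ∀ x : Fin k → ℝ, ∫ y in G, ∑ a, ∑ b, ∑ c, ∑ d, B d a * B c b *
      ((1 - vecMulVec x x : Matrix _ _ ℝ) d c * (1 - vecMulVec y y : Matrix _ _ ℝ) b a) *
        (exp (-(1 / 2) * (x ⬝ᵥ x)) * exp (-(1 / 2) * (y ⬝ᵥ y))) =
      ∑ a, ∑ b, ∑ c, ∑ d, B d a * B c b * gaussianMomentDefect G b a *
        ((1 - vecMulVec x x : Matrix _ _ ℝ) d c * exp (-(1 / 2) * (x ⬝ᵥ x))) := by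
    intro x
    have hre : ∀ (a b c d : Fin k) (y : Fin k → ℝ), B d a * B c b *
        ((1 - vecMulVec x x : Matrix _ _ ℝ) d c * (1 - vecMulVec y y : Matrix _ _ ℝ) b a) *
        (exp (-(1 / 2) * (x ⬝ᵥ x)) * exp (-(1 / 2) * (y ⬝ᵥ y))) =
        (B d a * B c b * ((1 - vecMulVec x x : Matrix _ _ ℝ) d c * exp (-(1 / 2) * (x ⬝ᵥ x)))) *
        ((1 - vecMulVec y y : Matrix _ _ ℝ) b a * exp (-(1 / 2) * (y ⬝ᵥ y))) := by
      intros; ring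
    simp only [hre]
    rw [integral_finsetSum _ fun a _ => integrable_finsetSum _ fun b _ =>
      integrable_finsetSum _ fun c _ => integrable_finsetSum _ fun d _ => hG' _ b a]
    refine Finset.sum_congr rfl fun a _ => ?_
    rw [integral_finsetSum _ fun b _ =>
      integrable_finsetSum _ fun c _ => integrable_finsetSum _ fun d _ => hG' _ b a]
    refine Finset.sum_congr rfl fun b _ => ?_
    rw [integral_finsetSum _ fun c _ => integrable_finsetSum _ fun d _ => hG' _ b a]
    refine Finset.sum_congr rfl fun c _ => ?_
    rw [integral_finsetSum _ fun d _ => hG' _ b a]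
    refine Finset.sum_congr rfl fun d _ => ?_
    rw [integral_const_mul]
    simp only [gaussianMomentDefect, of_apply]
    ring
  simp only [hinner]
  rw [integral_finsetSum _ fun a _ => integrable_finsetSum _ fun b _ =>
    integrable_finsetSum _ fun c _ => integrable_finsetSum _ fun d _ => hF' _ d c]
  refine Finset.sum_congr rfl fun a _ => ?_
  rw [integral_finsetSum _ fun b _ =>
    integrable_finsetSum _ fun c _ => integrable_finsetSum _ fun d _ => hF' _ d c]
  refine Finset.sum_congr rfl fun b _ => ?_
  rw [integral_finsetSum _ fun c _ => integrable_finsetSum _ fun d _ => hF' _ d c]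
  refine Finset.sum_congr rfl fun c _ => ?_
  rw [integral_finsetSum _ fun d _ => hF' _ d c]
  refine Finset.sum_congr rfl fun d _ => ?_
  rw [integral_const_mul]
  simp only [gaussianMomentDefect, of_apply]
  ring

theorem continuous_pairDensity {k : ℕ} (B : Matrix (Fin k) (Fin k) ℝ) :
    Continuous (Function.uncurry (pairDensity B)) := by
  have h : Continuous fun p : (Fin k → ℝ) × (Fin k → ℝ) => Sum.elim p.1 p.2 := by
    refine continuous_pi fun i => ?_
    cases i <;> simp only [Sum.elim_inl, Sum.elim_inr] <;> fun_prop
  have h2 := h.dotProduct (continuous_const.matrix_mulVec (A := fun _ => (fromBlocks 1 B Bᵀ 1)⁻¹) h)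
  exact continuous_const.mul (Real.continuous_exp.comp (continuous_const.mul h2))

theorem integral_integral_pairDensity_zero {k : ℕ} (F G : Set (Fin k → ℝ)) :
    ∫ x in F, ∫ y in G, pairDensity 0 x y = ((2 * π) ^ k)⁻¹ *
      ((∫ x in F, exp (-(1 / 2) * (x ⬝ᵥ x))) * ∫ y in G, exp (-(1 / 2) * (y ⬝ᵥ y))) := by
  have h : ∀ x y : Fin k → ℝ, pairDensity 0 x y =
      ((2 * π) ^ k)⁻¹ * (exp (-(1 / 2) * (x ⬝ᵥ x)) * exp (-(1 / 2) * (y ⬝ᵥ y))) := fun x y => by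
    rw [pairDensity, transpose_zero, fromBlocks_one, inv_one, one_mulVec, det_one, Real.sqrt_one,
      mul_one, sumElim_dotProduct_sumElim, ← Real.exp_add, mul_add]
  simp only [h, integral_const_mul, integral_mul_const]

theorem Continuous.setIntegral_right {k : ℕ} {f : (Fin k → ℝ) → (Fin k → ℝ) → ℝ}
    (hf : Continuous (Function.uncurry f)) {G : Set (Fin k → ℝ)} (hG : IsCompact G) :
    Continuous fun x => ∫ y in G, f x y :=
  continuous_parametric_integral_of_continuous hf hG

theorem setIntegral_setIntegral_mono {k : ℕ} {F G : Set (Fin k → ℝ)} (hF : IsCompact F)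
    (hG : IsCompact G) {f g : (Fin k → ℝ) → (Fin k → ℝ) → ℝ}
    (hf : Continuous (Function.uncurry f)) (hg : Continuous (Function.uncurry g))
    (h : ∀ x ∈ F, ∀ y ∈ G, f x y ≤ g x y) :
    ∫ x in F, ∫ y in G, f x y ≤ ∫ x in F, ∫ y in G, g x y :=
  setIntegral_mono_on ((hf.setIntegral_right hG).continuousOn.integrableOn_compact hF)
    ((hg.setIntegral_right hG).continuousOn.integrableOn_compact hF) hF.measurableSet fun x hx =>
      setIntegral_mono_on (hf.uncurry_left x |>.continuousOn.integrableOn_compact hG)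
        (hg.uncurry_left x |>.continuousOn.integrableOn_compact hG) hG.measurableSet (h x hx)

theorem setIntegral_setIntegral_add {k : ℕ} {F G : Set (Fin k → ℝ)} (hF : IsCompact F)
    (hG : IsCompact G) {f g : (Fin k → ℝ) → (Fin k → ℝ) → ℝ}
    (hf : Continuous (Function.uncurry f)) (hg : Continuous (Function.uncurry g)) :
    ∫ x in F, ∫ y in G, (f x y + g x y) =
      (∫ x in F, ∫ y in G, f x y) + ∫ x in F, ∫ y in G, g x y := by
  rw [← integral_add ((hf.setIntegral_right hG).continuousOn.integrableOn_compact hF)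
    ((hg.setIntegral_right hG).continuousOn.integrableOn_compact hF)]
  exact integral_congr_ae (Filter.Eventually.of_forall fun x =>
    integral_add (hf.uncurry_left x |>.continuousOn.integrableOn_compact hG)
      (hg.uncurry_left x |>.continuousOn.integrableOn_compact hG))

theorem exists_dotProduct_self_le {k : ℕ} {K : Set (Fin k → ℝ)} (hK : IsCompact K) :
    ∃ R, ∀ x ∈ K, x ⬝ᵥ x ≤ R := by
  have h : Continuous fun x : Fin k → ℝ => x ⬝ᵥ x := by unfold dotProduct; fun_prop
  obtain ⟨R, hR⟩ := hK.exists_bound_of_continuousOn h.continuousOn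
  exact ⟨R, fun x hx => (le_abs_self _).trans (hR x hx)⟩

/-- Second-order lower bound for the Gaussian mass of a product of symmetric bodies. -/
theorem exists_le_integral_integral_pairDensity {k : ℕ} {F G : Set (Fin k → ℝ)}
    (hF : IsCompact F) (hFsymm : ∀ x ∈ F, -x ∈ F) (hG : IsCompact G) :
    ∃ C, 0 ≤ C ∧ ∀ B : Matrix (Fin k) (Fin k) ℝ, ∑ i, ∑ j, B i j ^ 2 ≤ 1 / 4 →
      (∫ x in F, ∫ y in G, pairDensity 0 x y) + ((2 * π) ^ k)⁻¹ *
          ((1 / 2) * trace (Bᵀ * gaussianMomentDefect F * B * gaussianMomentDefect G) -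
            C * (∑ i, ∑ j, B i j ^ 2) ^ 2) ≤
        ∫ x in F, ∫ y in G, pairDensity B x y := by
  obtain ⟨R₁, hR₁⟩ := exists_dotProduct_self_le hF
  obtain ⟨R₂, hR₂⟩ := exists_dotProduct_self_le hG
  obtain ⟨C, hC0, hC⟩ := exists_le_density_add_density_neg k
    (le_max_of_le_right (le_refl (0 : ℝ)) : 0 ≤ max (max R₁ R₂) 0)
  have hfg : 0 ≤ (∫ x in F, exp (-(1 / 2) * (x ⬝ᵥ x))) * ∫ y in G, exp (-(1 / 2) * (y ⬝ᵥ y)) :=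
    mul_nonneg (integral_nonneg fun _ => (exp_pos _).le) (integral_nonneg fun _ => (exp_pos _).le)
  refine ⟨C * ((∫ x in F, exp (-(1 / 2) * (x ⬝ᵥ x))) * ∫ y in G, exp (-(1 / 2) * (y ⬝ᵥ y))),
    mul_nonneg hC0 hfg, fun B hB => ?_⟩
  specialize hC B hB
  set N := ∑ i, ∑ j, B i j ^ 2
  have hp := continuous_pairDensity B
  have hpn : Continuous (Function.uncurry fun x y => pairDensity B (-x) y) :=
    hp.comp ((continuous_fst.neg).prodMk continuous_snd)
  have hw : Continuous (Function.uncurry fun x y : Fin k → ℝ =>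
      exp (-(1 / 2) * (x ⬝ᵥ x)) * exp (-(1 / 2) * (y ⬝ᵥ y))) := by
    simp only [Function.uncurry_def, dotProduct]; fun_prop
  have ht : Continuous (Function.uncurry fun x y : Fin k → ℝ =>
      trace (Bᵀ * (1 - vecMulVec x x) * B * (1 - vecMulVec y y)) *
        (exp (-(1 / 2) * (x ⬝ᵥ x)) * exp (-(1 / 2) * (y ⬝ᵥ y)))) := by
    simp only [trace_transpose_mul_one_sub_vecMulVec]
    refine Continuous.mul ?_ hw
    simp only [dotProduct, mulVec]; fun_prop
  have hw' : Continuous (Function.uncurry fun x y : Fin k → ℝ => ((2 * π) ^ k)⁻¹ * (1 - C * N ^ 2) *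
      (exp (-(1 / 2) * (x ⬝ᵥ x)) * exp (-(1 / 2) * (y ⬝ᵥ y)))) := continuous_const.mul hw
  have ht' : Continuous (Function.uncurry fun x y : Fin k → ℝ => ((2 * π) ^ k)⁻¹ * (1 / 2) *
      (trace (Bᵀ * (1 - vecMulVec x x) * B * (1 - vecMulVec y y)) *
        (exp (-(1 / 2) * (x ⬝ᵥ x)) * exp (-(1 / 2) * (y ⬝ᵥ y))))) := continuous_const.mul ht
  have hsymm : ∫ x in F, ∫ y in G, (1 / 2) * (pairDensity B x y + pairDensity B (-x) y) =
      ∫ x in F, ∫ y in G, pairDensity B x y := by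
    simp only [integral_const_mul]
    rw [setIntegral_setIntegral_add hF hG hp hpn,
      setIntegral_neg_of_neg_mem hFsymm fun x => ∫ y in G, pairDensity B x y]
    ring
  have hlower : ∫ x in F, ∫ y in G, (((2 * π) ^ k)⁻¹ * (1 - C * N ^ 2) *
        (exp (-(1 / 2) * (x ⬝ᵥ x)) * exp (-(1 / 2) * (y ⬝ᵥ y))) +
      ((2 * π) ^ k)⁻¹ * (1 / 2) *
        (trace (Bᵀ * (1 - vecMulVec x x) * B * (1 - vecMulVec y y)) *
          (exp (-(1 / 2) * (x ⬝ᵥ x)) * exp (-(1 / 2) * (y ⬝ᵥ y))))) =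
      ((2 * π) ^ k)⁻¹ * (1 - C * N ^ 2) *
        ((∫ x in F, exp (-(1 / 2) * (x ⬝ᵥ x))) * ∫ y in G, exp (-(1 / 2) * (y ⬝ᵥ y))) +
      ((2 * π) ^ k)⁻¹ * (1 / 2) *
        trace (Bᵀ * gaussianMomentDefect F * B * gaussianMomentDefect G) := by
    rw [← integral_integral_trace_eq hF hG B,
      setIntegral_setIntegral_add hF hG hw' ht']
    simp only [integral_const_mul, integral_mul_const]
  have hmono := setIntegral_setIntegral_mono hF hG
    (f := fun x y => ((2 * π) ^ k)⁻¹ * (1 - C * N ^ 2) *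
        (exp (-(1 / 2) * (x ⬝ᵥ x)) * exp (-(1 / 2) * (y ⬝ᵥ y))) +
      ((2 * π) ^ k)⁻¹ * (1 / 2) *
        (trace (Bᵀ * (1 - vecMulVec x x) * B * (1 - vecMulVec y y)) *
          (exp (-(1 / 2) * (x ⬝ᵥ x)) * exp (-(1 / 2) * (y ⬝ᵥ y)))))
    (g := fun x y => (1 / 2) * (pairDensity B x y + pairDensity B (-x) y))
    ((hw'.add ht').congr fun _ => rfl) ((continuous_const.mul (hp.add hpn)).congr fun _ => rfl)
    fun x hx y hy => le_of_eq_of_le (by ring) (hC x y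
      ((hR₁ x hx).trans (by simp)) ((hR₂ y hy).trans (by simp)))
  rw [integral_integral_pairDensity_zero]
  have := hlower.symm.le.trans (hmono.trans_eq hsymm)
  linarith

theorem pairDensity_strict_local_min {k : ℕ} {F G : Set (Fin k → ℝ)}
    (hF : IsCompact F) (hFconv : Convex ℝ F) (hFsymm : ∀ x ∈ F, -x ∈ F)
    (hFint : (interior F).Nonempty) (hG : IsCompact G) (hGconv : Convex ℝ G)
    (hGsymm : ∀ x ∈ G, -x ∈ G) (hGint : (interior G).Nonempty) :
    ∃ ε > 0, ∀ B : Matrix (Fin k) (Fin k) ℝ, (∀ i j, |B i j| < ε) → B ≠ 0 →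
      ∫ x in F, ∫ y in G, pairDensity 0 x y < ∫ x in F, ∫ y in G, pairDensity B x y := by
  obtain ⟨C, hC0, hC⟩ := exists_le_integral_integral_pairDensity hF hFsymm hG
  obtain ⟨c, hc, htr⟩ := exists_pos_mul_sum_sq_le_trace
    (posDef_gaussianMomentDefect hG hGconv hGsymm hGint)
    (posDef_gaussianMomentDefect hF hFconv hFsymm hFint)
  set δ := min (1 / 4) (c / (2 * (C + 1))) with hδ
  have hδ0 : 0 < δ := by positivity
  refine ⟨√δ / (k + 1), by positivity, fun B hB hB0 => ?_⟩
  have hNpos : 0 < ∑ i, ∑ j, B i j ^ 2 := by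
    obtain ⟨i, j, hij⟩ : ∃ i j, B i j ≠ 0 := by
      by_contra! h
      exact hB0 (Matrix.ext h)
    exact Finset.sum_pos' (fun i _ => Finset.sum_nonneg fun j _ => sq_nonneg _)
      ⟨i, Finset.mem_univ i, Finset.sum_pos' (fun j _ => sq_nonneg _)
        ⟨j, Finset.mem_univ j, by positivity⟩⟩
  have hNδ : ∑ i, ∑ j, B i j ^ 2 ≤ δ :=
    calc ∑ i, ∑ j, B i j ^ 2 ≤ ∑ _i : Fin k, ∑ _j : Fin k, (√δ / (k + 1)) ^ 2 :=
          Finset.sum_le_sum fun i _ => Finset.sum_le_sum fun j _ => by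
            rw [← sq_abs]
            exact pow_le_pow_left₀ (abs_nonneg _) (hB i j).le 2
      _ = δ * (k / (k + 1)) ^ 2 := by
          simp only [Finset.sum_const, Finset.card_univ, Fintype.card_fin, nsmul_eq_mul]
          rw [div_pow, div_pow, Real.sq_sqrt hδ0.le]
          ring
      _ ≤ δ * 1 := by
          gcongr
          exact pow_le_one₀ (by positivity) ((div_le_one (by positivity)).2 (by linarith))
      _ = δ := mul_one _
  have h1 := hC B (hNδ.trans (min_le_left _ _))
  have h2 := htr B
  have h3 := hNδ.trans (min_le_right _ _)
  rw [le_div_iff₀ (by positivity)] at h3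
  refine lt_of_lt_of_le (lt_add_of_pos_right _ ?_) h1
  refine mul_pos (by positivity) ?_
  have h4 := mul_le_mul_of_nonneg_left h3 hNpos.le
  nlinarith [sq_pos_of_pos hNpos]

theorem setIntegral_setIntegral_closure {k : ℕ} {F G : Set (Fin k → ℝ)} (hF : Convex ℝ F)
    (hG : Convex ℝ G) (f : (Fin k → ℝ) → (Fin k → ℝ) → ℝ) :
    ∫ x in closure F, ∫ y in closure G, f x y = ∫ x in F, ∫ y in G, f x y := by
  rw [setIntegral_congr_set (closure_ae_eq_of_null_frontier (hF.addHaar_frontier volume))]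
  simp only [setIntegral_congr_set (closure_ae_eq_of_null_frontier (hG.addHaar_frontier volume))]

theorem neg_mem_closure_of_eq_neg {k : ℕ} {F : Set (Fin k → ℝ)} (hF : F = -F) :
    ∀ x ∈ closure F, -x ∈ closure F := fun x hx => by
  rw [hF, ← neg_closure]
  simpa using hx

/-- Theorem 2: the Gaussian measure of `F × G` with covariance `[[I, B],[Bᵀ, I]]`,
as a function of `B`, has a strict local minimum at `B = 0`. -/
theorem gaussian_FtimesG_strict_local_min (k : ℕ)
    (F G : Set (Fin k → ℝ))
    (hFconv : Convex ℝ F) (hFsymm : F = -F)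
    (hFcomp : IsCompact (closure F)) (hFint : (interior F).Nonempty)
    (hGconv : Convex ℝ G) (hGsymm : G = -G)
    (hGcomp : IsCompact (closure G)) (hGint : (interior G).Nonempty)
    -- μ_B (F × G) expressed through the Gaussian density with covariance
    -- 𝒜 = [[I, B], [Bᵀ, I]]
    (μFG : Matrix (Fin k) (Fin k) ℝ → ℝ)
    (hμFG : ∀ B : Matrix (Fin k) (Fin k) ℝ,
      μFG B = ∫ x in F, ∫ y in G,
        ((2 * π) ^ k * Real.sqrt (Matrix.fromBlocks 1 B Bᵀ 1).det)⁻¹ *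
          Real.exp (-(1/2) *
            (Sum.elim x y ⬝ᵥ ((Matrix.fromBlocks 1 B Bᵀ 1)⁻¹ *ᵥ Sum.elim x y)))) :
    ∃ ε > 0, ∀ B : Matrix (Fin k) (Fin k) ℝ,
      (∀ i j, |B i j| < ε) → B ≠ 0 → μFG 0 < μFG B := by
  obtain ⟨ε, hε, h⟩ := pairDensity_strict_local_min hFcomp hFconv.closure
    (neg_mem_closure_of_eq_neg hFsymm) (hFint.mono (interior_mono subset_closure)) hGcomp
    hGconv.closure (neg_mem_closure_of_eq_neg hGsymm) (hGint.mono (interior_mono subset_closure))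
  refine ⟨ε, hε, fun B hB hB0 => ?_⟩
  have hlt := h B hB hB0
  simp only [setIntegral_setIntegral_closure hFconv hGconv] at hlt
  rw [hμFG, hμFG]
  exact hlt
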